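/- The space X is complete for the norm ‖·‖_X: for every sequence (u_n) of functions in X such that for all ε > 0 there is M with ‖u_n − u_m‖_X < ε for all n, m ≥ M, there exists u ∈ X with ‖u_n − u‖_X → 0 as n → ∞ (and, along a subsequence, u_n → u almost everywhere in ℝ^N). -/

import Mathlib

open MeasureTheory Set Filter
open scoped ENNReal

noncomputable section

abbrev Eucl (N : ℕ) := EuclideanSpace ℝ (Fin N)

variable {N : ℕ}

/-- `Q = ℝ^{2N} \ (CΩ)^2`. -/
def Qset (Ω : Set (Eucl N)) : Set (Eucl N × Eucl N) := (Ωᶜ ×ˢ Ωᶜ)ᶜ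

/-- `φ_{x,y}(t) = a(x,y,|t|) t` for `t ≠ 0`, `φ_{x,y}(0) = 0`. -/
def phiF (a : Eucl N → Eucl N → ℝ → ℝ) (x y : Eucl N) (t : ℝ) : ℝ :=
  if t = 0 then 0 else a x y |t| * t

/-- `Φ_{x,y}(t) = ∫₀ᵗ φ_{x,y}(τ) dτ`. -/
def PhiF (a : Eucl N → Eucl N → ℝ → ℝ) (x y : Eucl N) (t : ℝ) : ℝ :=
  ∫ τ in (0:ℝ)..t, phiF a x y τ

/-- Gagliardo-type modular on `Q` at scale `lam`. -/
def modQ (a : Eucl N → Eucl N → ℝ → ℝ) (s : ℝ) (Ω : Set (Eucl N))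
    (u : Eucl N → ℝ) (lam : ℝ) : ℝ≥0∞ :=
  ∫⁻ p in Qset Ω, ENNReal.ofReal
    (PhiF a p.1 p.2 (|u p.1 - u p.2| / (lam * dist p.1 p.2 ^ s)) / dist p.1 p.2 ^ (N : ℝ))

/-- Gagliardo-type modular on `Ω × Ω` at scale `lam`. -/
def modOO (a : Eucl N → Eucl N → ℝ → ℝ) (s : ℝ) (Ω : Set (Eucl N))
    (u : Eucl N → ℝ) (lam : ℝ) : ℝ≥0∞ :=
  ∫⁻ p in Ω ×ˢ Ω, ENNReal.ofReal
    (PhiF a p.1 p.2 (|u p.1 - u p.2| / (lam * dist p.1 p.2 ^ s)) / dist p.1 p.2 ^ (N : ℝ))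

/-- modular `∫_Ω Φ̂_x(|u|/λ)`. -/
def modO (a : Eucl N → Eucl N → ℝ → ℝ) (Ω : Set (Eucl N))
    (u : Eucl N → ℝ) (lam : ℝ) : ℝ≥0∞ :=
  ∫⁻ x in Ω, ENNReal.ofReal (PhiF a x x (|u x| / lam))

/-- modular `∫_{CΩ} β Φ̂_x(|u|/λ)`. -/
def modB (a : Eucl N → Eucl N → ℝ → ℝ) (Ω : Set (Eucl N)) (β : Eucl N → ℝ)
    (u : Eucl N → ℝ) (lam : ℝ) : ℝ≥0∞ :=
  ∫⁻ x in Ωᶜ, ENNReal.ofReal (β x * PhiF a x x (|u x| / lam))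

/-- Luxemburg infimum of a modular family (`∞` if no admissible `λ`). -/
def lux (m : ℝ → ℝ≥0∞) : ℝ≥0∞ :=
  sInf {l : ℝ≥0∞ | ∃ lam : ℝ, 0 < lam ∧ l = ENNReal.ofReal lam ∧ m lam ≤ 1}

/-- `‖u‖_X = [u]_{s,Φ,Q} + ‖u‖_{Φ̂} + ‖u‖_{Φ̂,β,CΩ}`. -/
def normX (a : Eucl N → Eucl N → ℝ → ℝ) (s : ℝ) (Ω : Set (Eucl N)) (β : Eucl N → ℝ)
    (u : Eucl N → ℝ) : ℝ≥0∞ :=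
  lux (modQ a s Ω u) + lux (modO a Ω u) + lux (modB a Ω β u)

/-- the modular `ρ_s`. -/
def rhoS (a : Eucl N → Eucl N → ℝ → ℝ) (s : ℝ) (Ω : Set (Eucl N)) (β : Eucl N → ℝ)
    (u : Eucl N → ℝ) : ℝ≥0∞ :=
  modQ a s Ω u 1 + modO a Ω u 1 + modB a Ω β u 1

/-- the modular norm `‖u‖ = inf {λ > 0 : ρ_s(u/λ) ≤ 1}`. -/
def normM (a : Eucl N → Eucl N → ℝ → ℝ) (s : ℝ) (Ω : Set (Eucl N)) (β : Eucl N → ℝ)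
    (u : Eucl N → ℝ) : ℝ≥0∞ :=
  sInf {l : ℝ≥0∞ | ∃ lam : ℝ, 0 < lam ∧ l = ENNReal.ofReal lam ∧
    rhoS a s Ω β (fun x => u x / lam) ≤ 1}

/-- `X` described via the norm `‖·‖_X`. -/
def XsetX (a : Eucl N → Eucl N → ℝ → ℝ) (s : ℝ) (Ω : Set (Eucl N)) (β : Eucl N → ℝ) :
    Set (Eucl N → ℝ) :=
  {u | Measurable u ∧ normX a s Ω β u < ⊤}

/-- `X` described via the modular norm `‖·‖`. -/
def XsetM (a : Eucl N → Eucl N → ℝ → ℝ) (s : ℝ) (Ω : Set (Eucl N)) (β : Eucl N → ℝ) :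
    Set (Eucl N → ℝ) :=
  {u | Measurable u ∧ (∃ lam : ℝ, 0 < lam ∧ rhoS a s Ω β (fun x => u x / lam) < ⊤) ∧
    normM a s Ω β u < ⊤}

/-- the fractional difference quotient `D^s u`. -/
def Du (s : ℝ) (u : Eucl N → ℝ) (p : Eucl N × Eucl N) : ℝ :=
  (u p.1 - u p.2) / dist p.1 p.2 ^ s

/-- `a(x,y,|D^s u|) D^s u`, with the convention that it vanishes when `u x = u y`. -/
def Ku (a : Eucl N → Eucl N → ℝ → ℝ) (s : ℝ) (u : Eucl N → ℝ) (p : Eucl N × Eucl N) : ℝ :=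
  if u p.1 = u p.2 then 0 else a p.1 p.2 |Du s u p| * Du s u p

/-- the form `A_s(u,v)`. -/
def Aform (a : Eucl N → Eucl N → ℝ → ℝ) (s : ℝ) (Ω : Set (Eucl N)) (β : Eucl N → ℝ)
    (u v : Eucl N → ℝ) : ℝ :=
  (1/2) * (∫ p in Qset Ω, Ku a s u p * Du s v p / dist p.1 p.2 ^ (N : ℝ))
  + (∫ x in Ω, a x x |u x| * u x * v x)
  + ∫ x in Ωᶜ, β x * (a x x |u x| * u x * v x)

/-- the nonlocal normal derivative `𝒩^s_a u` on `CΩ`. -/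
def Nop (a : Eucl N → Eucl N → ℝ → ℝ) (s : ℝ) (Ω : Set (Eucl N)) (u : Eucl N → ℝ)
    (x : Eucl N) : ℝ :=
  ∫ y in Ω, Ku a s u (x, y) / dist x y ^ ((N : ℝ) + s)

/-- `F(x,t) = ∫₀ᵗ f(x,τ) dτ`. -/
def Ff (f : Eucl N → ℝ → ℝ) (x : Eucl N) (t : ℝ) : ℝ := ∫ τ in (0:ℝ)..t, f x τ

/-- the energy functional `J_λ`. -/
def Jlam (a : Eucl N → Eucl N → ℝ → ℝ) (s : ℝ) (Ω : Set (Eucl N)) (β : Eucl N → ℝ)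
    (f : Eucl N → ℝ → ℝ) (lam : ℝ) (u : Eucl N → ℝ) : ℝ :=
  (1/2) * (modQ a s Ω u 1).toReal + (modO a Ω u 1).toReal + (modB a Ω β u 1).toReal
    - lam * ∫ x in Ω, Ff f x (u x)

/-- the variable-exponent Luxemburg norm `‖u‖_{q(·)}` on `Ω`. -/
def normq (Ω : Set (Eucl N)) (q : Eucl N → ℝ) (u : Eucl N → ℝ) : ℝ≥0∞ :=
  sInf {l : ℝ≥0∞ | ∃ lam : ℝ, 0 < lam ∧ l = ENNReal.ofReal lam ∧
    (∫⁻ x in Ω, ENNReal.ofReal (|u x / lam| ^ q x)) ≤ 1}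

/-! Everything rests on two properties of `‖·‖_X`: it is subadditive, by convexity of `Φ`, and lower
semicontinuous under almost everywhere convergence, by Fatou's lemma. Once a subsequence of a Cauchy
sequence converges a.e. to some `u`, letting `m → ∞` along it in `‖u_n - u_m‖_X < ε` gives
`‖u_n - u‖_X ≤ ε`.

The a.e. convergence is immediate in `Ω`, but the exterior norm says nothing where `β = 0`. There
one uses the Gagliardo seminorm: `Q` contains `{x} × ℝ^N` for every `x ∈ Ω`, so it suffices to fix
one `x ∈ Ω` at which `u_n(x)` converges and, for a.e. `y`, so do the quotients
`(u_n(x) - u_n(y)) / |x - y|^s`. -/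

section MonotonePrimitive

variable {f : ℝ → ℝ}

lemma mul_le_integral_of_monotone (hf : Monotone f) {x y : ℝ} (hxy : x ≤ y) :
    (y - x) * f x ≤ ∫ τ in x..y, f τ := by
  rw [← smul_eq_mul, ← intervalIntegral.integral_const]
  exact intervalIntegral.integral_mono_on hxy intervalIntegrable_const hf.intervalIntegrable
    fun τ hτ => hf hτ.1

lemma integral_le_mul_of_monotone (hf : Monotone f) {x y : ℝ} (hxy : x ≤ y) :
    ∫ τ in x..y, f τ ≤ (y - x) * f y := by
  rw [← smul_eq_mul, ← intervalIntegral.integral_const]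
  exact intervalIntegral.integral_mono_on hxy hf.intervalIntegrable intervalIntegrable_const
    fun τ hτ => hf hτ.2

lemma convexOn_integral_of_monotone (hf : Monotone f) (c : ℝ) :
    ConvexOn ℝ univ fun t => ∫ τ in c..t, f τ := by
  refine convexOn_of_slope_mono_adjacent convex_univ fun {x y z} _ _ hxy hyz => ?_
  simp only [intervalIntegral.integral_interval_sub_left hf.intervalIntegrable
    hf.intervalIntegrable]
  calc (∫ τ in x..y, f τ) / (y - x) ≤ f y :=
        (div_le_iff₀' (sub_pos.2 hxy)).2 (integral_le_mul_of_monotone hf hxy.le)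
    _ ≤ (∫ τ in y..z, f τ) / (z - y) :=
        (le_div_iff₀' (sub_pos.2 hyz)).2 (mul_le_integral_of_monotone hf hyz.le)

lemma monotoneOn_integral_of_monotone (hf : Monotone f) {c : ℝ} (hc : 0 ≤ f c) :
    MonotoneOn (fun t => ∫ τ in c..t, f τ) (Ici c) := by
  intro t ht t' _ htt'
  have hnonneg : 0 ≤ ∫ τ in t..t', f τ :=
    (mul_nonneg (sub_nonneg.2 htt') (hc.trans (hf ht))).trans (mul_le_integral_of_monotone hf htt')
  rw [← intervalIntegral.integral_interval_sub_left hf.intervalIntegrable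
    hf.intervalIntegrable (a := c)] at hnonneg
  exact sub_nonneg.1 hnonneg

end MonotonePrimitive

lemma liminf_add_liminf_le_liminf_add {ι : Type*} {l : Filter ι} (f g : ι → ℝ≥0∞) :
    liminf f l + liminf g l ≤ liminf (fun i => f i + g i) l := by
  rw [liminf_eq (u := f), liminf_eq (u := g), sSup_eq_iSup, sSup_eq_iSup]
  have hne (h : ι → ℝ≥0∞) : {b | ∀ᶠ i in l, b ≤ h i}.Nonempty :=
    ⟨0, Eventually.of_forall fun _ => zero_le⟩
  refine ENNReal.biSup_add_biSup_le (hne f) (hne g) fun b hb c hc => ?_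
  exact le_liminf_of_le (by isBoundedDefault) (hb.mp (hc.mono fun i hci hbi => add_le_add hbi hci))

lemma ae_tendsto_zero_of_tsum_lintegral_ne_top {α : Type*} [MeasurableSpace α] {μ : Measure α}
    {f : ℕ → α → ℝ≥0∞} (hf : ∀ k, AEMeasurable (f k) μ) (hsum : ∑' k, ∫⁻ p, f k p ∂μ ≠ ⊤) :
    ∀ᵐ p ∂μ, Tendsto (fun k => f k p) atTop (nhds 0) := by
  rw [← lintegral_tsum hf] at hsum
  filter_upwards [ae_lt_top' (AEMeasurable.tsum hf) hsum] with p hp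
  exact ENNReal.tendsto_atTop_zero_of_tsum_ne_top hp.ne

section Lux

variable {m : ℝ → ℝ≥0∞}

lemma lux_le_ofReal {l : ℝ} (hl : 0 < l) (hm : m l ≤ 1) : lux m ≤ ENNReal.ofReal l :=
  sInf_le ⟨l, hl, rfl, hm⟩

lemma le_one_of_lux_lt_ofReal (hanti : AntitoneOn m (Ioi 0)) {l : ℝ}
    (hl : lux m < ENNReal.ofReal l) : m l ≤ 1 := by
  obtain ⟨_, ⟨l', hl', rfl, hm⟩, hlt⟩ := sInf_lt_iff.1 hl
  have hl'l : l' < l := (ENNReal.ofReal_lt_ofReal_iff_of_nonneg hl'.le).1 hlt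
  exact (hanti hl' (hl'.trans hl'l) hl'l.le).trans hm

lemma le_lux_add_lux {m' : ℝ → ℝ≥0∞} {c : ℝ≥0∞}
    (h : ∀ l l' : ℝ, 0 < l → 0 < l' → m l ≤ 1 → m' l' ≤ 1 → c ≤ ENNReal.ofReal (l + l')) :
    c ≤ lux m + lux m' := by
  rw [lux, lux, sInf_eq_iInf, sInf_eq_iInf]
  refine ENNReal.le_iInf₂_add_iInf₂ ?_
  rintro _ ⟨l, hl, rfl, hm⟩ _ ⟨l', hl', rfl, hm'⟩
  exact (h l l' hl hl' hm hm').trans_eq (ENNReal.ofReal_add hl.le hl'.le)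

end Lux

section MusielakOrlicz

variable {α : Type*} [MeasurableSpace α]

/-- A Musielak–Orlicz function: a measurable family of Young functions indexed by `p : α`. Only the
restrictions of the `Ψ p` to `[0, ∞)` matter. -/
structure IsMusielakOrlicz (Ψ : α → ℝ → ℝ) : Prop where
  measurable : Measurable (Function.uncurry Ψ)
  continuousOn : ∀ p, ContinuousOn (Ψ p) (Ici 0)
  convexOn : ∀ p, ConvexOn ℝ (Ici 0) (Ψ p)
  monotoneOn : ∀ p, MonotoneOn (Ψ p) (Ici 0)
  map_zero : ∀ p, Ψ p 0 = 0
  exists_pos : ∀ p, ∃ t, 0 < t ∧ 0 < Ψ p t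

/-- The modular `∫ Ψ_p(|v(p)| / l) dμ(p)` of `v` at scale `l`; weights such as `β` or
`|x - y|^{-N}` are part of the measure `μ`. -/
def musielakModular (Ψ : α → ℝ → ℝ) (μ : Measure α) (v : α → ℝ) (l : ℝ) : ℝ≥0∞ :=
  ∫⁻ p, ENNReal.ofReal (Ψ p (|v p| / l)) ∂μ

/-- The Luxemburg norm associated with `musielakModular Ψ μ`, equal to `∞` outside the
Musielak–Orlicz space. -/
def luxemburgNorm (Ψ : α → ℝ → ℝ) (μ : Measure α) (v : α → ℝ) : ℝ≥0∞ :=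
  lux (musielakModular Ψ μ v)

namespace IsMusielakOrlicz

lemma of_monotone {f : α → ℝ → ℝ} (hf : Measurable (Function.uncurry f))
    (hmono : ∀ p, Monotone (f p)) (hzero : ∀ p, 0 ≤ f p 0) (hpos : ∀ p, ∃ t, 0 < f p t) :
    IsMusielakOrlicz fun p t => ∫ τ in 0..t, f p τ where
  measurable := by
    have hcont (p : α) : Continuous fun t => ∫ τ in 0..t, f p τ :=
      intervalIntegral.continuous_primitive (fun _ _ => (hmono p).intervalIntegrable) 0
    have hmeas (t : ℝ) : Measurable fun p => ∫ τ in 0..t, f p τ :=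
      (hf.stronglyMeasurable.integral_prod_right.sub
        hf.stronglyMeasurable.integral_prod_right).measurable
    exact (measurable_uncurry_of_continuous_of_measurable hcont hmeas).comp measurable_swap
  continuousOn p :=
    (intervalIntegral.continuous_primitive
      (fun _ _ => (hmono p).intervalIntegrable) 0).continuousOn
  convexOn p :=
    (convexOn_integral_of_monotone (hmono p) 0).subset (subset_univ _) (convex_Ici 0)
  monotoneOn p := monotoneOn_integral_of_monotone (hmono p) (hzero p)
  map_zero _ := intervalIntegral.integral_same
  exists_pos p := by
    obtain ⟨t, ht⟩ := hpos p
    set T := max t 0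
    have hT : 0 ≤ T := le_max_right t 0
    refine ⟨T + 1, by positivity, ?_⟩
    calc 0 < f p t := ht
      _ ≤ f p T := hmono p (le_max_left t 0)
      _ ≤ ∫ τ in T..T + 1, f p τ := by
        simpa only [add_sub_cancel_left, one_mul] using
          mul_le_integral_of_monotone (hmono p) (le_add_of_nonneg_right zero_le_one)
      _ ≤ (∫ τ in 0..T, f p τ) + ∫ τ in T..T + 1, f p τ :=
        le_add_of_nonneg_left <| (mul_nonneg (sub_nonneg.2 hT) (hzero p)).trans
          (mul_le_integral_of_monotone (hmono p) hT)
      _ = ∫ τ in 0..T + 1, f p τ :=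
        intervalIntegral.integral_add_adjacent_intervals (hmono p).intervalIntegrable
          (hmono p).intervalIntegrable

variable {Ψ : α → ℝ → ℝ} {μ : Measure α} {v w : α → ℝ}

lemma comp {γ : Type*} [MeasurableSpace γ] (hΨ : IsMusielakOrlicz Ψ) {g : γ → α}
    (hg : Measurable g) : IsMusielakOrlicz fun x => Ψ (g x) where
  measurable := hΨ.measurable.comp (hg.prodMap measurable_id)
  continuousOn x := hΨ.continuousOn (g x)
  convexOn x := hΨ.convexOn (g x)
  monotoneOn x := hΨ.monotoneOn (g x)
  map_zero x := hΨ.map_zero (g x)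
  exists_pos x := hΨ.exists_pos (g x)

lemma nonneg (hΨ : IsMusielakOrlicz Ψ) (p : α) {t : ℝ} (ht : 0 ≤ t) : 0 ≤ Ψ p t :=
  (hΨ.map_zero p).symm.trans_le (hΨ.monotoneOn p self_mem_Ici ht ht)

lemma map_mul_le (hΨ : IsMusielakOrlicz Ψ) (p : α) {c t : ℝ} (hc0 : 0 ≤ c) (hc1 : c ≤ 1)
    (ht : 0 ≤ t) : Ψ p (c * t) ≤ c * Ψ p t := by
  simpa [hΨ.map_zero p] using
    (hΨ.convexOn p).2 self_mem_Ici ht (sub_nonneg.2 hc1) hc0 (sub_add_cancel 1 c)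

lemma map_abs_sub_div_add_le (hΨ : IsMusielakOrlicz Ψ) (p : α) (x y : ℝ) {l l' : ℝ} (hl : 0 < l)
    (hl' : 0 < l') :
    Ψ p (|x - y| / (l + l')) ≤
      l / (l + l') * Ψ p (|x| / l) + l' / (l + l') * Ψ p (|y| / l') := by
  have hcomb : |x - y| / (l + l') ≤ l / (l + l') * (|x| / l) + l' / (l + l') * (|y| / l') :=
    calc |x - y| / (l + l') ≤ (|x| + |y|) / (l + l') := by gcongr; exact abs_sub x y
      _ = l / (l + l') * (|x| / l) + l' / (l + l') * (|y| / l') := by field_simp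
  refine (hΨ.monotoneOn p (mem_Ici.2 (by positivity)) (mem_Ici.2 (by positivity)) hcomb).trans ?_
  exact (hΨ.convexOn p).2 (mem_Ici.2 (by positivity)) (mem_Ici.2 (by positivity)) (by positivity)
    (by positivity) (by field_simp)

lemma measurable_integrand (hΨ : IsMusielakOrlicz Ψ) (hv : Measurable v) (l : ℝ) :
    Measurable fun p => ENNReal.ofReal (Ψ p (|v p| / l)) :=
  (hΨ.measurable.comp (measurable_id.prodMk (hv.abs.div_const l))).ennreal_ofReal

lemma antitoneOn_modular (hΨ : IsMusielakOrlicz Ψ) (μ : Measure α) (v : α → ℝ) :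
    AntitoneOn (musielakModular Ψ μ v) (Ioi 0) := by
  intro l (hl : 0 < l) l' (hl' : 0 < l') hll'
  refine lintegral_mono fun p => ENNReal.ofReal_le_ofReal ?_
  exact hΨ.monotoneOn p (mem_Ici.2 (by positivity)) (mem_Ici.2 (by positivity)) (by gcongr)

lemma modular_div_le (hΨ : IsMusielakOrlicz Ψ) (μ : Measure α) (v : α → ℝ) {l c : ℝ} (hl : 0 ≤ l)
    (hc0 : 0 ≤ c) (hc1 : c ≤ 1) :
    musielakModular Ψ μ v (l / c) ≤ ENNReal.ofReal c * musielakModular Ψ μ v l := by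
  unfold musielakModular
  rw [← lintegral_const_mul' _ _ ENNReal.ofReal_ne_top]
  refine lintegral_mono fun p => ?_
  rw [← ENNReal.ofReal_mul hc0, div_div_eq_mul_div, mul_comm, mul_div_assoc]
  exact ENNReal.ofReal_le_ofReal (hΨ.map_mul_le p hc0 hc1 (by positivity))

lemma modular_sub_le (hΨ : IsMusielakOrlicz Ψ) (hv : Measurable v) (w : α → ℝ) {l l' : ℝ}
    (hl : 0 < l) (hl' : 0 < l') :
    musielakModular Ψ μ (v - w) (l + l') ≤
      ENNReal.ofReal (l / (l + l')) * musielakModular Ψ μ v l +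
        ENNReal.ofReal (l' / (l + l')) * musielakModular Ψ μ w l' := by
  unfold musielakModular
  rw [← lintegral_const_mul' _ _ ENNReal.ofReal_ne_top,
    ← lintegral_const_mul' _ _ ENNReal.ofReal_ne_top,
    ← lintegral_add_left ((hΨ.measurable_integrand hv l).const_mul _)]
  refine lintegral_mono fun p => ?_
  have hΨv : 0 ≤ Ψ p (|v p| / l) := hΨ.nonneg p (by positivity)
  have hΨw : 0 ≤ Ψ p (|w p| / l') := hΨ.nonneg p (by positivity)
  dsimp only
  rw [← ENNReal.ofReal_mul (by positivity), ← ENNReal.ofReal_mul (by positivity),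
    ← ENNReal.ofReal_add (by positivity) (by positivity)]
  exact ENNReal.ofReal_le_ofReal (hΨ.map_abs_sub_div_add_le p (v p) (w p) hl hl')

theorem luxemburgNorm_sub_le (hΨ : IsMusielakOrlicz Ψ) (hv : Measurable v) (w : α → ℝ) :
    luxemburgNorm Ψ μ (v - w) ≤ luxemburgNorm Ψ μ v + luxemburgNorm Ψ μ w := by
  refine le_lux_add_lux fun l l' hl hl' hvl hwl' => lux_le_ofReal (by positivity) ?_
  calc musielakModular Ψ μ (v - w) (l + l')
      ≤ ENNReal.ofReal (l / (l + l')) * 1 + ENNReal.ofReal (l' / (l + l')) * 1 :=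
        (hΨ.modular_sub_le hv w hl hl').trans (by gcongr)
    _ = 1 := by
        rw [mul_one, mul_one, ← ENNReal.ofReal_add (by positivity) (by positivity), ← add_div,
          div_self (by positivity), ENNReal.ofReal_one]

variable {V : ℕ → α → ℝ}

lemma modular_le_liminf (hΨ : IsMusielakOrlicz Ψ) (hV : ∀ k, Measurable (V k))
    (hlim : ∀ᵐ p ∂μ, Tendsto (fun k => V k p) atTop (nhds (v p))) {l : ℝ} (hl : 0 ≤ l) :
    musielakModular Ψ μ v l ≤ liminf (fun k => musielakModular Ψ μ (V k) l) atTop := by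
  refine le_trans (lintegral_mono_ae ?_)
    (lintegral_liminf_le fun k => hΨ.measurable_integrand (hV k) l)
  filter_upwards [hlim] with p hp
  have hnonneg (x : ℝ) : |x| / l ∈ Ici (0 : ℝ) := mem_Ici.2 (by positivity)
  have hΨp : Tendsto (fun k => Ψ p (|V k p| / l)) atTop (nhds (Ψ p (|v p| / l))) :=
    (hΨ.continuousOn p _ (hnonneg (v p))).tendsto.comp <| tendsto_nhdsWithin_iff.2
      ⟨hp.abs.div_const l, Eventually.of_forall fun k => hnonneg (V k p)⟩
  exact (ENNReal.tendsto_ofReal hΨp).liminf_eq.ge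

theorem luxemburgNorm_le_liminf (hΨ : IsMusielakOrlicz Ψ) (hV : ∀ k, Measurable (V k))
    (hlim : ∀ᵐ p ∂μ, Tendsto (fun k => V k p) atTop (nhds (v p))) :
    luxemburgNorm Ψ μ v ≤ liminf (fun k => luxemburgNorm Ψ μ (V k)) atTop := by
  refine le_of_forall_gt_imp_ge_of_dense fun c hc => ?_
  obtain ⟨l, -, hliml, hlc⟩ := ENNReal.lt_iff_exists_real_btwn.1 hc
  have hl : 0 < l := ENNReal.ofReal_pos.1 (pos_of_gt hliml)
  have hfreq : ∃ᶠ k in atTop, musielakModular Ψ μ (V k) l ≤ 1 :=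
    (frequently_lt_of_liminf_lt (by isBoundedDefault) hliml).mono fun k hk =>
      le_one_of_lux_lt_ofReal (hΨ.antitoneOn_modular μ (V k)) hk
  have hmod : musielakModular Ψ μ v l ≤ 1 :=
    (hΨ.modular_le_liminf hV hlim hl.le).trans (liminf_le_of_frequently_le' hfreq)
  exact (lux_le_ofReal hl hmod).trans hlc.le

lemma cauchySeq_of_tendsto_zero (hΨ : IsMusielakOrlicz Ψ) {p : α} {x : ℕ → ℝ} {r : ℝ}
    (hr0 : 0 < r) (hr1 : r < 1)
    (h : Tendsto (fun k => ENNReal.ofReal (Ψ p (|x (k + 1) - x k| / r ^ k))) atTop (nhds 0)) :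
    CauchySeq x := by
  obtain ⟨t, ht, hΨt⟩ := hΨ.exists_pos p
  obtain ⟨K, hK⟩ := eventually_atTop.1
    (h.eventually (gt_mem_nhds (ENNReal.ofReal_pos.2 hΨt)))
  have hstep : ∀ k ≥ K, |x (k + 1) - x k| ≤ t * r ^ k := by
    intro k hk
    rw [← div_le_iff₀ (by positivity)]
    by_contra! hlt
    exact (hK k hk).not_ge <| ENNReal.ofReal_le_ofReal <|
      hΨ.monotoneOn p ht.le (ht.trans hlt).le hlt.le
  refine (cauchySeq_shift K).1 (cauchySeq_of_le_geometric r (t * r ^ K) hr1 fun k => ?_)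
  rw [dist_comm, Real.dist_eq, mul_assoc, ← pow_add, add_comm K k, add_right_comm]
  exact hstep (k + K) (Nat.le_add_left K k)

/-- Steps of norm less than `4⁻ᵏ` leave room for convexity to make the modulars at scale `2⁻ᵏ`
summable. -/
theorem ae_cauchySeq (hΨ : IsMusielakOrlicz Ψ) (hV : ∀ k, Measurable (V k))
    (hsmall : ∀ k, luxemburgNorm Ψ μ (V (k + 1) - V k) < ENNReal.ofReal ((1 / 4) ^ k)) :
    ∀ᵐ p ∂μ, CauchySeq fun k => V k p := by
  have hmod (k : ℕ) : musielakModular Ψ μ (V (k + 1) - V k) ((1 / 2) ^ k) ≤ 2⁻¹ ^ k := by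
    have hscale : (1 / 2 : ℝ) ^ k = (1 / 4) ^ k / (1 / 2) ^ k := by rw [← div_pow]; norm_num
    calc musielakModular Ψ μ (V (k + 1) - V k) ((1 / 2) ^ k)
        = musielakModular Ψ μ (V (k + 1) - V k) ((1 / 4) ^ k / (1 / 2) ^ k) := by rw [← hscale]
      _ ≤ ENNReal.ofReal ((1 / 2) ^ k) * musielakModular Ψ μ (V (k + 1) - V k) ((1 / 4) ^ k) :=
        hΨ.modular_div_le μ _ (by positivity) (by positivity)
          (pow_le_one₀ (by norm_num) (by norm_num))
      _ ≤ ENNReal.ofReal ((1 / 2) ^ k) * 1 := by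
        gcongr
        exact le_one_of_lux_lt_ofReal (hΨ.antitoneOn_modular μ _) (hsmall k)
      _ = 2⁻¹ ^ k := by
        rw [mul_one, one_div, ENNReal.ofReal_pow (by norm_num),
          ENNReal.ofReal_inv_of_pos two_pos, ENNReal.ofReal_ofNat]
  have hsum : ∑' k, musielakModular Ψ μ (V (k + 1) - V k) ((1 / 2) ^ k) ≠ ⊤ := by
    refine ((ENNReal.tsum_le_tsum hmod).trans_lt ?_).ne
    simp [ENNReal.tsum_geometric, ENNReal.one_sub_inv_two]
  have hmeas (k : ℕ) :=
    (hΨ.measurable_integrand ((hV (k + 1)).sub (hV k)) ((1 / 2) ^ k)).aemeasurable (μ := μ)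
  filter_upwards [ae_tendsto_zero_of_tsum_lintegral_ne_top hmeas hsum] with p hp
  exact hΨ.cauchySeq_of_tendsto_zero (r := 1 / 2) (by norm_num) (by norm_num) hp

end IsMusielakOrlicz

end MusielakOrlicz

lemma isMusielakOrlicz_PhiF {a : Eucl N → Eucl N → ℝ → ℝ}
    (ha : Measurable fun p : Eucl N × Eucl N × ℝ => a p.1 p.2.1 p.2.2)
    (hmono : ∀ x y, Monotone (phiF a x y)) (hpos : ∀ x y, ∃ t, 0 < phiF a x y t) :
    IsMusielakOrlicz fun p : Eucl N × Eucl N => PhiF a p.1 p.2 := by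
  have hphi : Measurable fun q : (Eucl N × Eucl N) × ℝ => phiF a q.1.1 q.1.2 q.2 := by
    have habs : Measurable fun q : (Eucl N × Eucl N) × ℝ => (q.1.1, q.1.2, |q.2|) := by fun_prop
    exact Measurable.ite (measurable_snd (measurableSet_singleton 0)) measurable_const
      ((ha.comp habs).mul measurable_snd)
  exact .of_monotone hphi (fun p => hmono p.1 p.2) (fun p => (if_pos rfl).ge)
    fun p => hpos p.1 p.2

section FractionalSobolev

variable {s : ℝ} {Ω : Set (Eucl N)} {a : Eucl N → Eucl N → ℝ → ℝ} {β : Eucl N → ℝ}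

lemma measurable_Du {u : Eucl N → ℝ} (hu : Measurable u) : Measurable (Du s u) :=
  ((hu.comp measurable_fst).sub (hu.comp measurable_snd)).div (measurable_dist.pow_const s)

lemma Du_sub (u v : Eucl N → ℝ) : Du s (u - v) = Du s u - Du s v := by
  funext p
  simp only [Du, Pi.sub_apply]
  ring

/-- The measure `|x - y|^{-N} dx dy` on `Q`, for which the Gagliardo seminorm of `u` is the
Luxemburg norm of `Du s u`. -/
def gagliardoMeasure (Ω : Set (Eucl N)) : Measure (Eucl N × Eucl N) :=
  (volume.restrict (Qset Ω)).withDensity fun p => ENNReal.ofReal (dist p.1 p.2 ^ (N : ℝ))⁻¹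

/-- The measure `β dx` on `CΩ`; negative values of `β` are truncated to `0`. -/
def exteriorMeasure (Ω : Set (Eucl N)) (β : Eucl N → ℝ) : Measure (Eucl N) :=
  (volume.restrict Ωᶜ).withDensity fun x => ENNReal.ofReal (β x)

lemma measurable_gagliardoDensity :
    Measurable fun p : Eucl N × Eucl N => ENNReal.ofReal (dist p.1 p.2 ^ (N : ℝ))⁻¹ :=
  (measurable_dist.pow_const (N : ℝ)).inv.ennreal_ofReal

lemma gagliardoMeasure_absolutelyContinuous (Ω : Set (Eucl N)) :
    gagliardoMeasure Ω ≪ (volume : Measure (Eucl N × Eucl N)) :=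
  (withDensity_absolutelyContinuous _ _).trans Measure.absolutelyContinuous_restrict

lemma exteriorMeasure_absolutelyContinuous (Ω : Set (Eucl N)) (β : Eucl N → ℝ) :
    exteriorMeasure Ω β ≪ volume :=
  (withDensity_absolutelyContinuous _ _).trans Measure.absolutelyContinuous_restrict

lemma modQ_eq_musielakModular (a : Eucl N → Eucl N → ℝ → ℝ) (s : ℝ) (Ω : Set (Eucl N))
    (u : Eucl N → ℝ) :
    modQ a s Ω u = musielakModular (fun p => PhiF a p.1 p.2) (gagliardoMeasure Ω) (Du s u) := by
  funext l
  rw [musielakModular, gagliardoMeasure, lintegral_withDensity_eq_lintegral_mul_non_measurable _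
    measurable_gagliardoDensity (ae_of_all _ fun _ => ENNReal.ofReal_lt_top)]
  refine lintegral_congr fun p => ?_
  rw [Pi.mul_apply, ← ENNReal.ofReal_mul (by positivity), div_eq_inv_mul, Du, abs_div,
    abs_of_nonneg (Real.rpow_nonneg dist_nonneg s), div_div, mul_comm l]

lemma modB_eq_musielakModular (a : Eucl N → Eucl N → ℝ → ℝ) (hβm : Measurable β)
    (hβ0 : ∀ᵐ x ∂(volume.restrict Ωᶜ), 0 ≤ β x) (u : Eucl N → ℝ) :
    modB a Ω β u = musielakModular (fun x => PhiF a x x) (exteriorMeasure Ω β) u := by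
  funext l
  rw [musielakModular, exteriorMeasure, lintegral_withDensity_eq_lintegral_mul_non_measurable _
    hβm.ennreal_ofReal (ae_of_all _ fun _ => ENNReal.ofReal_lt_top)]
  refine lintegral_congr_ae ?_
  filter_upwards [hβ0] with x hx
  exact ENNReal.ofReal_mul hx

lemma normX_eq_luxemburgNorm (a : Eucl N → Eucl N → ℝ → ℝ) (s : ℝ) (hβm : Measurable β)
    (hβ0 : ∀ᵐ x ∂(volume.restrict Ωᶜ), 0 ≤ β x) (u : Eucl N → ℝ) :
    normX a s Ω β u =
      luxemburgNorm (fun p => PhiF a p.1 p.2) (gagliardoMeasure Ω) (Du s u) +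
        luxemburgNorm (fun x => PhiF a x x) (volume.restrict Ω) u +
        luxemburgNorm (fun x => PhiF a x x) (exteriorMeasure Ω β) u := by
  rw [normX, modQ_eq_musielakModular, modB_eq_musielakModular a hβm hβ0]
  rfl

lemma luxemburgNorm_Du_le_normX (a : Eucl N → Eucl N → ℝ → ℝ) (s : ℝ) (Ω : Set (Eucl N))
    (β u : Eucl N → ℝ) :
    luxemburgNorm (fun p => PhiF a p.1 p.2) (gagliardoMeasure Ω) (Du s u) ≤ normX a s Ω β u := by
  rw [normX, modQ_eq_musielakModular, add_assoc]
  exact le_self_add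

lemma luxemburgNorm_restrict_le_normX (a : Eucl N → Eucl N → ℝ → ℝ) (s : ℝ) (Ω : Set (Eucl N))
    (β u : Eucl N → ℝ) :
    luxemburgNorm (fun x => PhiF a x x) (volume.restrict Ω) u ≤ normX a s Ω β u :=
  le_add_self.trans le_self_add

lemma isMusielakOrlicz_diag
    (hΦ : IsMusielakOrlicz fun p : Eucl N × Eucl N => PhiF a p.1 p.2) :
    IsMusielakOrlicz fun x => PhiF a x x :=
  hΦ.comp (measurable_id.prodMk measurable_id)

theorem normX_sub_le (hΦ : IsMusielakOrlicz fun p : Eucl N × Eucl N => PhiF a p.1 p.2) (s : ℝ)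
    (hβm : Measurable β) (hβ0 : ∀ᵐ x ∂(volume.restrict Ωᶜ), 0 ≤ β x) {u : Eucl N → ℝ}
    (hu : Measurable u) (v : Eucl N → ℝ) :
    normX a s Ω β (u - v) ≤ normX a s Ω β u + normX a s Ω β v := by
  have hdiag := isMusielakOrlicz_diag hΦ
  simp only [normX_eq_luxemburgNorm a s hβm hβ0, Du_sub]
  refine (add_le_add_three (hΦ.luxemburgNorm_sub_le (measurable_Du hu) (Du s v))
    (hdiag.luxemburgNorm_sub_le hu v) (hdiag.luxemburgNorm_sub_le hu v)).trans_eq ?_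
  ring

lemma ae_tendsto_Du {V : ℕ → Eucl N → ℝ} {u : Eucl N → ℝ}
    (hlim : ∀ᵐ x, Tendsto (fun k => V k x) atTop (nhds (u x))) :
    ∀ᵐ p, Tendsto (fun k => Du s (V k) p) atTop (nhds (Du s u p)) := by
  filter_upwards [Measure.quasiMeasurePreserving_fst.ae hlim,
    Measure.quasiMeasurePreserving_snd.ae hlim] with p hfst hsnd
  exact (hfst.sub hsnd).div_const _

theorem normX_le_liminf (hΦ : IsMusielakOrlicz fun p : Eucl N × Eucl N => PhiF a p.1 p.2) (s : ℝ)
    (hβm : Measurable β) (hβ0 : ∀ᵐ x ∂(volume.restrict Ωᶜ), 0 ≤ β x) {V : ℕ → Eucl N → ℝ}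
    {u : Eucl N → ℝ} (hV : ∀ k, Measurable (V k))
    (hlim : ∀ᵐ x, Tendsto (fun k => V k x) atTop (nhds (u x))) :
    normX a s Ω β u ≤ liminf (fun k => normX a s Ω β (V k)) atTop := by
  have hdiag := isMusielakOrlicz_diag hΦ
  simp only [normX_eq_luxemburgNorm a s hβm hβ0]
  refine le_trans (add_le_add_three ?_ ?_ ?_) <|
    (add_le_add_left (liminf_add_liminf_le_liminf_add _ _) _).trans
      (liminf_add_liminf_le_liminf_add _ _)
  · exact hΦ.luxemburgNorm_le_liminf (fun k => measurable_Du (hV k))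
      ((gagliardoMeasure_absolutelyContinuous Ω).ae_le (ae_tendsto_Du hlim))
  · exact hdiag.luxemburgNorm_le_liminf hV (ae_restrict_of_ae hlim)
  · exact hdiag.luxemburgNorm_le_liminf hV
      ((exteriorMeasure_absolutelyContinuous Ω β).ae_le hlim)

lemma ae_ae_of_ae_gagliardoMeasure (hΩ : MeasurableSet Ω) {P : Eucl N × Eucl N → Prop}
    (hP : ∀ᵐ p ∂(gagliardoMeasure Ω), P p) :
    ∀ᵐ x, x ∈ Ω → ∀ᵐ y, x ≠ y → P (x, y) := by
  have hQ : MeasurableSet (Qset Ω) := (hΩ.compl.prod hΩ.compl).compl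
  rw [gagliardoMeasure, ae_withDensity_iff measurable_gagliardoDensity, ae_restrict_iff' hQ] at hP
  filter_upwards [Measure.ae_ae_of_ae_prod hP] with x hx hxΩ
  filter_upwards [hx] with y hy hxy
  have hdist : 0 < dist x y := dist_pos.2 hxy
  exact hy (by simp [Qset, hxΩ]) (ENNReal.ofReal_pos.2 (by positivity)).ne'

lemma cauchySeq_of_cauchySeq_Du {V : ℕ → Eucl N → ℝ} {x y : Eucl N} (hxy : x ≠ y)
    (hx : CauchySeq fun k => V k x) (hDu : CauchySeq fun k => Du s (V k) (x, y)) :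
    CauchySeq fun k => V k y := by
  have hdist : dist x y ^ s ≠ 0 := (Real.rpow_pos_of_pos (dist_pos.2 hxy) s).ne'
  have heq (k : ℕ) : V k y = V k x - dist x y ^ s * Du s (V k) (x, y) := by
    rw [Du, mul_div_cancel₀ _ hdist, sub_sub_cancel]
  simp only [heq]
  exact uniformContinuous_sub.comp_cauchySeq <|
    hx.prodMk ((uniformContinuous_const_smul (dist x y ^ s)).comp_cauchySeq hDu)

theorem ae_cauchySeq_of_normX_lt
    (hΦ : IsMusielakOrlicz fun p : Eucl N × Eucl N => PhiF a p.1 p.2) (hΩ : MeasurableSet Ω)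
    (hΩ0 : volume Ω ≠ 0) {V : ℕ → Eucl N → ℝ} (hV : ∀ k, Measurable (V k))
    (hsmall : ∀ k, normX a s Ω β (V (k + 1) - V k) < ENNReal.ofReal ((1 / 4) ^ k)) :
    ∀ᵐ y, CauchySeq fun k => V k y := by
  have hΩae : ∀ᵐ x, x ∈ Ω → CauchySeq fun k => V k x :=
    (ae_restrict_iff' hΩ).1 <| (isMusielakOrlicz_diag hΦ).ae_cauchySeq hV fun k =>
      (luxemburgNorm_restrict_le_normX a s Ω β _).trans_lt (hsmall k)
  have hQae : ∀ᵐ x, x ∈ Ω → ∀ᵐ y, x ≠ y → CauchySeq fun k => Du s (V k) (x, y) :=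
    ae_ae_of_ae_gagliardoMeasure hΩ <| hΦ.ae_cauchySeq (fun k => measurable_Du (hV k)) fun k =>
      Du_sub (s := s) (V (k + 1)) (V k) ▸
        (luxemburgNorm_Du_le_normX a s Ω β _).trans_lt (hsmall k)
  obtain ⟨x, hx, hxQ⟩ : ∃ x, (CauchySeq fun k => V k x) ∧
      ∀ᵐ y, x ≠ y → CauchySeq fun k => Du s (V k) (x, y) := by
    obtain ⟨x, hxΩ, hx⟩ := ((frequently_ae_mem_iff.2 hΩ0).and_eventually (hΩae.and hQae)).exists
    exact ⟨x, hx.1 hxΩ, hx.2 hxΩ⟩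
  filter_upwards [hxQ] with y hy
  rcases eq_or_ne x y with rfl | hxy
  · exact hx
  · exact cauchySeq_of_cauchySeq_Du hxy hx (hy hxy)

end FractionalSobolev

theorem statement3_general {Ω : Set (Eucl N)} (hΩ : MeasurableSet Ω) (hΩ0 : volume Ω ≠ 0)
    {s : ℝ} {a : Eucl N → Eucl N → ℝ → ℝ}
    (ha : Measurable fun p : Eucl N × Eucl N × ℝ => a p.1 p.2.1 p.2.2)
    (hmono : ∀ x y, Monotone (phiF a x y)) (hpos : ∀ x y, ∃ t, 0 < phiF a x y t)
    {β : Eucl N → ℝ} (hβm : Measurable β) (hβ0 : ∀ᵐ x ∂(volume.restrict Ωᶜ), 0 ≤ β x)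
    {useq : ℕ → Eucl N → ℝ} (hseq : ∀ n, useq n ∈ XsetX a s Ω β)
    (hcauchy : ∀ ε : ℝ, 0 < ε → ∃ M : ℕ, ∀ n m : ℕ, M ≤ n → M ≤ m →
      normX a s Ω β (fun x => useq n x - useq m x) < ENNReal.ofReal ε) :
    ∃ u ∈ XsetX a s Ω β,
      Tendsto (fun n => normX a s Ω β (fun x => useq n x - u x)) atTop (nhds 0) ∧
      ∃ ns : ℕ → ℕ, StrictMono ns ∧
        ∀ᵐ x : Eucl N, Tendsto (fun k => useq (ns k) x) atTop (nhds (u x)) := by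
  have hΦ := isMusielakOrlicz_PhiF ha hmono hpos
  have hmeas (n : ℕ) : Measurable (useq n) := (hseq n).1
  obtain ⟨ns, hns, hsmall⟩ := extraction_forall_of_eventually' fun k : ℕ =>
    (hcauchy ((1 / 4) ^ k) (by positivity)).imp fun M hM j hj n m (hn : j ≤ n) (hm : j ≤ m) =>
      hM n m (hj.trans hn) (hj.trans hm)
  have hae : ∀ᵐ x, CauchySeq fun k => useq (ns k) x :=
    ae_cauchySeq_of_normX_lt hΦ hΩ hΩ0 (fun k => hmeas (ns k)) fun k =>
      hsmall k _ _ (hns.monotone (Nat.le_succ k)) le_rfl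
  obtain ⟨u, hu, hlim⟩ := measurable_limit_of_tendsto_metrizable_ae
    (fun k => (hmeas (ns k)).aemeasurable) (hae.mono fun x => cauchySeq_tendsto_of_complete)
  have hle (ε : ℝ) (hε : 0 < ε) :
      ∃ M, ∀ n ≥ M, normX a s Ω β (useq n - u) ≤ ENNReal.ofReal ε := by
    obtain ⟨M, hM⟩ := hcauchy ε hε
    refine ⟨M, fun n hn => (normX_le_liminf hΦ s hβm hβ0 (fun k => (hmeas n).sub (hmeas (ns k)))
      (hlim.mono fun x hx => tendsto_const_nhds.sub hx)).trans ?_⟩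
    refine liminf_le_of_frequently_le' (Eventually.frequently ?_)
    filter_upwards [hns.tendsto_atTop.eventually_ge_atTop M] with k hk using (hM n _ hn hk).le
  refine ⟨u, ⟨hu, ?_⟩, ENNReal.tendsto_atTop_zero.2 fun ε hε => ?_, ns, hns, hlim⟩
  · obtain ⟨M, hM⟩ := hle 1 one_pos
    rw [← sub_sub_cancel (useq M) u]
    exact (normX_sub_le hΦ s hβm hβ0 (hmeas M) _).trans_lt <|
      ENNReal.add_lt_top.2 ⟨(hseq M).2, (hM M le_rfl).trans_lt ENNReal.ofReal_lt_top⟩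
  · obtain ⟨r, -, hr, hrε⟩ := ENNReal.lt_iff_exists_real_btwn.1 hε
    exact (hle r (ENNReal.ofReal_pos.1 hr)).imp fun M hM n hn => (hM n hn).trans hrε.le

/-- `X` is complete for the norm `‖·‖_X`. -/
theorem statement3
    (N : ℕ) (hN : 1 ≤ N)
    (Ω : Set (Eucl N)) (hΩo : IsOpen Ω) (hΩb : Bornology.IsBounded Ω) (hΩne : Ω.Nonempty)
    (s : ℝ) (hs : s ∈ Set.Ioo (0:ℝ) 1)
    (a : Eucl N → Eucl N → ℝ → ℝ)
    (ha : Measurable fun p : Eucl N × Eucl N × ℝ => a p.1 p.2.1 p.2.2)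
    (hmono : ∀ x y, StrictMono (phiF a x y))
    (hcont : ∀ x y, Continuous (phiF a x y))
    (hsurj : ∀ x y, Function.Surjective (phiF a x y))
    (β : Eucl N → ℝ) (hβm : Measurable β)
    (hβb : ∃ C : ℝ, ∀ᵐ x ∂(volume.restrict Ωᶜ), |β x| ≤ C)
    (hβ0 : ∀ᵐ x ∂(volume.restrict Ωᶜ), 0 ≤ β x)
    (φm φp : ℝ) (hφm : 1 < φm) (hφmp : φm ≤ φp)
    (hΦ1 : ∀ x y t, 0 < t →
      φm ≤ t * phiF a x y t / PhiF a x y t ∧ t * phiF a x y t / PhiF a x y t ≤ φp)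
    (useq : ℕ → Eucl N → ℝ) (hseq : ∀ n, useq n ∈ XsetX a s Ω β)
    (hcauchy : ∀ ε : ℝ, 0 < ε → ∃ M : ℕ, ∀ n m : ℕ, M ≤ n → M ≤ m →
      normX a s Ω β (fun x => useq n x - useq m x) < ENNReal.ofReal ε) :
    ∃ u ∈ XsetX a s Ω β,
      Tendsto (fun n => normX a s Ω β (fun x => useq n x - u x)) atTop (nhds 0) ∧
      ∃ ns : ℕ → ℕ, StrictMono ns ∧
        ∀ᵐ x : Eucl N, Tendsto (fun k => useq (ns k) x) atTop (nhds (u x)) := by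
  exact statement3_general hΩo.measurableSet (hΩo.measure_pos volume hΩne).ne' ha
    (fun x y => (hmono x y).monotone) (fun x y => ⟨1, by simpa [phiF] using hmono x y one_pos⟩)
    hβm hβ0 hseq hcauchy
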